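/- Let r ≥ 2 and let (M_n)_{n ∈ ℕ} be a family of r×r real symmetric negative definite matrices such that (M_n) 1 1 = (M_n) 2 2 = -(n+2)/(n+1), (M_n) 1 2 = (M_n) 2 1 = 1/(n+1), all other entries of M_n are independent of n, and all off-diagonal entries of every M_n are nonnegative. Let c ∈ ℝ^r satisfy c i ≥ 0 for all i and c 1 = c 2 = 0, and set m = (M_0)⁻¹ c and m' = (M_n)⁻¹ c. Then -m'ᵀ M_n m' = -mᵀ M_0 m + (n/(n+1))·(m 1 - m 2)·(m' 1 - m' 2). -/

import Mathlib

open Matrix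

/-- A real matrix whose quadratic form is negative on nonzero vectors is invertible. -/
theorem isUnit_det_of_dotProduct_mulVec_neg {ι : Type*} [Fintype ι] [DecidableEq ι]
    {A : Matrix ι ι ℝ} (hA : ∀ x : ι → ℝ, x ≠ 0 → x ⬝ᵥ (A *ᵥ x) < 0) : IsUnit A.det := by
  rw [isUnit_iff_ne_zero]
  intro hdet
  obtain ⟨v, hv, hAv⟩ := Matrix.exists_mulVec_eq_zero_iff.mpr hdet
  simpa [hAv] using hA v hv

/-- Effect of a symmetric rank-one perturbation on the value `c ⬝ᵥ x` of the solution of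
`A *ᵥ x = c`. -/
theorem dotProduct_sub_of_add_smul_vecMulVec {ι R : Type*} [Fintype ι] [CommRing R]
    {A : Matrix ι ι R} (hA : A.IsSymm) (t : R) (u : ι → R) {c x y : ι → R}
    (hx : A *ᵥ x = c) (hy : (A + t • vecMulVec u u) *ᵥ y = c) :
    x ⬝ᵥ c - y ⬝ᵥ c = t * (u ⬝ᵥ x) * (u ⬝ᵥ y) := by
  have hxy : x ⬝ᵥ (A *ᵥ y) = y ⬝ᵥ c := by
    rw [dotProduct_mulVec, ← mulVec_transpose, hA.eq, hx, dotProduct_comm]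
  have hpert : (t • vecMulVec u u) *ᵥ y = (t * (u ⬝ᵥ y)) • u := by
    rw [smul_mulVec, vecMulVec_mulVec, op_smul_eq_smul, smul_smul]
  have hxc : x ⬝ᵥ c = y ⬝ᵥ c + t * (u ⬝ᵥ y) * (u ⬝ᵥ x) := by
    conv_lhs => rw [← hy]
    rw [add_mulVec, dotProduct_add, hxy, hpert, dotProduct_smul, smul_eq_mul,
      dotProduct_comm x u]
  rw [hxc]
  ring

/-- **Lemma 1.8(ii).** For the family `M_n` of intersection matrices arising from a
`(-2)`-insertion of a chain of `n` `(-2)`-curves, with `m = M₀⁻¹ c` and `m' = M_n⁻¹ c`,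
`-m'ᵀ M_n m' = -mᵀ M₀ m + (n/(n+1))·(m₁ - m₂)·(m'₁ - m'₂)`. -/
theorem insertion_quadratic_difference
    (r : ℕ) (hr : 2 ≤ r) (N : ℕ → Matrix (Fin r) (Fin r) ℝ)
    (hsymm : ∀ n : ℕ, (N n).IsSymm)
    (hnegdef : ∀ n : ℕ, ∀ x : Fin r → ℝ, x ≠ 0 → x ⬝ᵥ (N n *ᵥ x) < 0)
    (h00 : ∀ n : ℕ, N n ⟨0, by omega⟩ ⟨0, by omega⟩ = -((n : ℝ) + 2) / ((n : ℝ) + 1))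
    (h11 : ∀ n : ℕ, N n ⟨1, by omega⟩ ⟨1, by omega⟩ = -((n : ℝ) + 2) / ((n : ℝ) + 1))
    (h01 : ∀ n : ℕ, N n ⟨0, by omega⟩ ⟨1, by omega⟩ = 1 / ((n : ℝ) + 1))
    (h10 : ∀ n : ℕ, N n ⟨1, by omega⟩ ⟨0, by omega⟩ = 1 / ((n : ℝ) + 1))
    (hconst : ∀ n k : ℕ, ∀ i j : Fin r, ¬((i : ℕ) ≤ 1 ∧ (j : ℕ) ≤ 1) → N n i j = N k i j)
    (hoffdiag : ∀ n : ℕ, ∀ i j : Fin r, i ≠ j → 0 ≤ N n i j)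
    (c : Fin r → ℝ) (hc : ∀ i, 0 ≤ c i)
    (hc0 : c ⟨0, by omega⟩ = 0) (hc1 : c ⟨1, by omega⟩ = 0)
    (n : ℕ)
    (m : Fin r → ℝ) (hm : m = (N 0)⁻¹ *ᵥ c)
    (m' : Fin r → ℝ) (hm' : m' = (N n)⁻¹ *ᵥ c) :
    - (m' ⬝ᵥ (N n *ᵥ m')) =
      - (m ⬝ᵥ (N 0 *ᵥ m)) +
        ((n : ℝ) / ((n : ℝ) + 1)) * (m ⟨0, by omega⟩ - m ⟨1, by omega⟩) *
          (m' ⟨0, by omega⟩ - m' ⟨1, by omega⟩) := by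
  have hsolve : ∀ k, N k *ᵥ ((N k)⁻¹ *ᵥ c) = c := fun k => by
    rw [mulVec_mulVec, mul_nonsing_inv _ (isUnit_det_of_dotProduct_mulVec_neg (hnegdef k)),
      one_mulVec]
  have hNm : N 0 *ᵥ m = c := hm ▸ hsolve 0
  have hNm' : N n *ᵥ m' = c := hm' ▸ hsolve n
  have hn : (n : ℝ) + 1 ≠ 0 := by positivity
  let u : Fin r → ℝ := Pi.single ⟨0, by omega⟩ 1 - Pi.single ⟨1, by omega⟩ 1
  have hu : ∀ x : Fin r → ℝ, u ⬝ᵥ x = x ⟨0, by omega⟩ - x ⟨1, by omega⟩ := fun x => by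
    simp [u, sub_dotProduct]
  have hu_zero : ∀ i : Fin r, ¬(i : ℕ) ≤ 1 → u i = 0 := fun i hi => by
    have hi0 : i ≠ ⟨0, by omega⟩ := fun h => hi (by simp [h])
    have hi1 : i ≠ ⟨1, by omega⟩ := fun h => hi (by simp [h])
    simp [u, hi0, hi1]
  have hcases : ∀ i : Fin r, (i : ℕ) ≤ 1 → i = ⟨0, by omega⟩ ∨ i = ⟨1, by omega⟩ :=
    fun i hi => by simp only [Fin.ext_iff]; omega
  have hrank : N n = N 0 + ((n : ℝ) / (n + 1)) • vecMulVec u u := by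
    ext i j
    by_cases hij : (i : ℕ) ≤ 1 ∧ (j : ℕ) ≤ 1
    · rcases hcases i hij.1 with rfl | rfl <;> rcases hcases j hij.2 with rfl | rfl <;>
        simp [h00, h01, h10, h11, u, vecMulVec_apply] <;> field_simp <;> ring
    · have huij : u i * u j = 0 := by
        rcases not_and_or.mp hij with hi | hj
        · rw [hu_zero i hi, zero_mul]
        · rw [hu_zero j hj, mul_zero]
      simp [vecMulVec_apply, huij, hconst n 0 i j hij]
  have hdiff := dotProduct_sub_of_add_smul_vecMulVec (hsymm 0) _ u hNm (hrank ▸ hNm')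
  rw [hu, hu] at hdiff
  rw [hNm, hNm', ← hdiff]
  ring
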